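/- arXiv:2412.03429 — 2 statements merged into one kernel-verified Lean document; each statement's English description precedes it below -/
import Mathlib

section
/- (Theorem D.2, optimal coherent combination via the structural approach.) The structural weight matrix G minimizes the trace of the coherent error covariance among all unbiased structural weight matrices: for every G' : Matrix (Fin b) (Fin m) ℝ with G' * K * S = 1, one has trace(S * G * W * Gᵀ * Sᵀ) ≤ trace(S * G' * W * G'ᵀ * Sᵀ). -/
open Matrix

/-!
Unbiasedness says that `G'` is a left inverse of `A := K * S`, and `G` is the generalized least
squares left inverse of `A`. Two left inverses differ by some `D` with `D * A = 0`. Since `G * W` is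
a multiple of `Aᴴ`, the cross terms `G * W * Dᴴ` and `D * W * Gᴴ` vanish, so the covariances
satisfy a Pythagorean identity: `G' * W * G'ᴴ` exceeds `G * W * Gᴴ` by the positive semidefinite
matrix `D * W * Dᴴ`. This Loewner inequality (Gauss–Markov–Aitken) survives conjugation by `S`, and
the trace is monotone for the Loewner order.
-/

theorem add_mul_mul_conjTranspose_add_of_orthogonal {R l m : Type*} [Fintype m]
    [NonUnitalSemiring R] [StarRing R] {W : Matrix m m R} (hW : W.IsHermitian)
    {G D : Matrix l m R} (hGD : G * W * Dᴴ = 0) :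
    (G + D) * W * (G + D)ᴴ = G * W * Gᴴ + D * W * Dᴴ := by
  have hDG : D * W * Gᴴ = 0 := by
    simpa only [conjTranspose_mul, conjTranspose_conjTranspose, conjTranspose_zero, hW.eq,
      Matrix.mul_assoc] using congrArg conjTranspose hGD
  simp only [conjTranspose_add, Matrix.add_mul, Matrix.mul_add, hGD, hDG, add_zero, zero_add]

theorem trace_mul_mul_conjTranspose_le_of_posSemidef_sub {R l m : Type*} [Fintype l]
    [Fintype m] [Ring R] [PartialOrder R] [AddLeftMono R] [StarRing R] {M N : Matrix m m R}
    (hMN : (N - M).PosSemidef) (C : Matrix l m R) :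
    (C * M * Cᴴ).trace ≤ (C * N * Cᴴ).trace := by
  have hC : 0 ≤ (C * (N - M) * Cᴴ).trace := (hMN.mul_mul_conjTranspose_same C).trace_nonneg
  rwa [Matrix.mul_sub, Matrix.sub_mul, trace_sub, sub_nonneg] at hC

section GeneralizedLeastSquares

variable {R l m n : Type*} [Fintype m] [DecidableEq m] [Fintype n] [DecidableEq n]
  [CommRing R] [StarRing R]

/-- The generalized least squares weights for the design matrix `A` and the error covariance `W`:
the matrix sending an observation `y` to the estimate of `β` in the linear model `y = A β + ε`. The
formula is meaningful when `W` and `Aᴴ * W⁻¹ * A` are invertible, as `⁻¹` is `0` otherwise. -/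
noncomputable def glsWeights (W : Matrix m m R) (A : Matrix m n R) : Matrix n m R :=
  (Aᴴ * W⁻¹ * A)⁻¹ * Aᴴ * W⁻¹

variable {W : Matrix m m R} {A : Matrix m n R}

theorem glsWeights_mul_design (hA : IsUnit (Aᴴ * W⁻¹ * A)) : glsWeights W A * A = 1 := by
  simpa only [glsWeights, Matrix.mul_assoc] using
    nonsing_inv_mul (Aᴴ * W⁻¹ * A) ((isUnit_iff_isUnit_det _).1 hA)

theorem glsWeights_mul_covariance (hW : IsUnit W) :
    glsWeights W A * W = (Aᴴ * W⁻¹ * A)⁻¹ * Aᴴ :=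
  nonsing_inv_mul_cancel_right _ _ ((isUnit_iff_isUnit_det _).1 hW)

theorem glsWeights_mul_mul_conjTranspose_eq_zero (hW : IsUnit W) {D : Matrix l m R}
    (hD : D * A = 0) : glsWeights W A * W * Dᴴ = 0 := by
  rw [glsWeights_mul_covariance hW, Matrix.mul_assoc, ← conjTranspose_mul, hD,
    conjTranspose_zero, Matrix.mul_zero]

theorem glsWeights_design_mul {k : Type*} [Fintype k] (W : Matrix m m R) (K : Matrix m k R)
    (S : Matrix k n R) :
    glsWeights W (K * S) = (Sᴴ * (Kᴴ * W⁻¹ * K) * S)⁻¹ * Sᴴ * Kᴴ * W⁻¹ := by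
  simp only [glsWeights, conjTranspose_mul, Matrix.mul_assoc]

end GeneralizedLeastSquares

section GaussMarkov

variable {𝕜 m n : Type*} [Fintype m] [DecidableEq m] [DecidableEq n] [Field 𝕜]
  [PartialOrder 𝕜] [StarRing 𝕜] {W : Matrix m m 𝕜} {A : Matrix m n 𝕜}

theorem posDef_conjTranspose_mul_inv_mul_of_mul_eq_one [Finite n] (hW : W.PosDef)
    {B : Matrix n m 𝕜} (hB : B * A = 1) : (Aᴴ * W⁻¹ * A).PosDef := by
  have := Fintype.ofFinite n
  have hA : Function.LeftInverse B.mulVec A.mulVec := fun x ↦ by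
    rw [mulVec_mulVec, hB, one_mulVec]
  exact hW.inv.conjTranspose_mul_mul_same hA.injective

theorem posSemidef_covariance_sub_glsWeights [Fintype n] (hW : W.PosDef) {B : Matrix n m 𝕜}
    (hB : B * A = 1) :
    (B * W * Bᴴ - glsWeights W A * W * (glsWeights W A)ᴴ).PosSemidef := by
  set G := glsWeights W A
  have hG : G * A = 1 :=
    glsWeights_mul_design (posDef_conjTranspose_mul_inv_mul_of_mul_eq_one hW hB).isUnit
  have hD : (B - G) * A = 0 := by rw [Matrix.sub_mul, hB, hG, sub_self]
  have pythagoras : B * W * Bᴴ = G * W * Gᴴ + (B - G) * W * (B - G)ᴴ := by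
    have orthogonal : G * W * (B - G)ᴴ = 0 :=
      glsWeights_mul_mul_conjTranspose_eq_zero hW.isUnit hD
    simpa only [add_sub_cancel] using
      add_mul_mul_conjTranspose_add_of_orthogonal hW.isHermitian orthogonal
  rw [pythagoras, add_sub_cancel_left]
  exact hW.posSemidef.mul_mul_conjTranspose_same (B - G)

end GaussMarkov

theorem structural_minimum_trace_general {𝕜 m n b : Type*} [Field 𝕜] [PartialOrder 𝕜]
    [AddLeftMono 𝕜] [StarRing 𝕜] [Fintype m] [DecidableEq m] [Fintype n] [Fintype b]
    [DecidableEq b] (W : Matrix m m 𝕜) (hW : W.PosDef) (K : Matrix m n 𝕜) (S : Matrix n b 𝕜) :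
    let G : Matrix b m 𝕜 := (Sᴴ * (Kᴴ * W⁻¹ * K) * S)⁻¹ * Sᴴ * Kᴴ * W⁻¹
    ∀ G' : Matrix b m 𝕜, G' * K * S = 1 →
      (S * G * W * Gᴴ * Sᴴ).trace ≤ (S * G' * W * G'ᴴ * Sᴴ).trace := by
  intro G G' hG'
  have hG : glsWeights W (K * S) = G := glsWeights_design_mul W K S
  have loewner : (G' * W * G'ᴴ - G * W * Gᴴ).PosSemidef :=
    hG ▸ posSemidef_covariance_sub_glsWeights hW ((Matrix.mul_assoc G' K S).symm.trans hG')
  simpa only [Matrix.mul_assoc] using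
    trace_mul_mul_conjTranspose_le_of_posSemidef_sub loewner S

/-- Theorem D.2: the structural weight matrix G minimizes the trace of the coherent
error covariance among all unbiased structural weight matrices. -/
theorem structural_minimum_trace {m n b : ℕ}
    (W : Matrix (Fin m) (Fin m) ℝ) (hW : W.PosDef)
    (K : Matrix (Fin m) (Fin n) ℝ) (hK : (Kᵀ * W⁻¹ * K).PosDef)
    (S : Matrix (Fin n) (Fin b) ℝ)
    (hS : (Sᵀ * (Kᵀ * W⁻¹ * K) * S).PosDef) :
    let G : Matrix (Fin b) (Fin m) ℝ :=
      (Sᵀ * (Kᵀ * W⁻¹ * K) * S)⁻¹ * Sᵀ * Kᵀ * W⁻¹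
    ∀ G' : Matrix (Fin b) (Fin m) ℝ, G' * K * S = 1 →
      (S * G * W * Gᵀ * Sᵀ).trace ≤ (S * G' * W * G'ᵀ * Sᵀ).trace := by
  simpa only [conjTranspose_eq_transpose_of_trivial] using
    structural_minimum_trace_general W hW K S
end

section
/- (Equivalence of by-expert and by-variable organizations, Appendix D.2.) Let σ : Equiv.Perm (Fin m) and let P : Matrix (Fin m) (Fin m) ℝ be its permutation matrix (so P * Pᵀ = 1). Define Σ := P * W * Pᵀ, J := P * K, Σ_c := (Jᵀ * Σ⁻¹ * J)⁻¹, Γ := Σ⁻¹ * J * Σ_c, and M' := 1 - Σ_c * Cᵀ * (C * Σ_c * Cᵀ)⁻¹ * C. Then Σ_c = W_c, M' = M, Γ = P * Ω, and M' * Γᵀ * P = M * Ωᵀ; in particular, for every base-forecast vector ŷ : Fin m → ℝ, the by-variable coherent combined forecast (M' * Γᵀ).mulVec (P.mulVec ŷ) equals the by-expert one (M * Ωᵀ).mulVec ŷ. -/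
/-!
Congruence by an invertible `P` leaves generalized least squares unchanged. Since
`(P * W * Pᵀ)⁻¹ = (P⁻¹)ᵀ * W⁻¹ * P⁻¹`, each factor `P` in `P * K` cancels: the information matrix
`Kᵀ * W⁻¹ * K` is invariant, while the weights `W⁻¹ * K * W_c` pick up a factor `(P⁻¹)ᵀ`, which
compensates for the change of coordinates in the base forecasts. For a permutation matrix,
`(P⁻¹)ᵀ = P`.
-/

open Matrix

section GeneralizedLeastSquares

variable {ι κ ν R : Type*} [Fintype ι] [DecidableEq ι] [CommRing R]

/-- The information matrix of the linear model with design matrix `K` and error covariance `W`. -/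
noncomputable def informationMatrix (W : Matrix ι ι R) (K : Matrix ι κ R) : Matrix κ κ R :=
  Kᵀ * W⁻¹ * K

variable {P : Matrix ι ι R}

theorem inv_congruence_mul (W : Matrix ι ι R) (K : Matrix ι κ R) (hP : IsUnit P.det) :
    (P * W * Pᵀ)⁻¹ * (P * K) = (P⁻¹)ᵀ * (W⁻¹ * K) := by
  rw [Matrix.mul_inv_rev, Matrix.mul_inv_rev, ← transpose_nonsing_inv, Matrix.mul_assoc,
    Matrix.mul_assoc, nonsing_inv_mul_cancel_left _ _ hP]

theorem informationMatrix_congruence (W : Matrix ι ι R) (K : Matrix ι κ R) (hP : IsUnit P.det) :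
    informationMatrix (P * W * Pᵀ) (P * K) = informationMatrix W K :=
  calc (P * K)ᵀ * (P * W * Pᵀ)⁻¹ * (P * K)
      = (P * K)ᵀ * ((P⁻¹)ᵀ * (W⁻¹ * K)) := by
        rw [Matrix.mul_assoc, inv_congruence_mul W K hP]
    _ = (P⁻¹ * (P * K))ᵀ * (W⁻¹ * K) := by
        rw [transpose_mul P⁻¹, Matrix.mul_assoc]
    _ = Kᵀ * W⁻¹ * K := by
        rw [nonsing_inv_mul_cancel_left _ _ hP, Matrix.mul_assoc]

variable [Fintype κ] [DecidableEq κ] [Fintype ν] [DecidableEq ν]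

/-- The error covariance `W_c` of the optimal (generalized least squares) combination of base
forecasts, before the constraints are imposed. -/
noncomputable def combinedCovariance (W : Matrix ι ι R) (K : Matrix ι κ R) : Matrix κ κ R :=
  (informationMatrix W K)⁻¹

/-- The weight matrix `Ω` of the optimal combination: base forecasts `y` are combined into
`Ωᵀ *ᵥ y`. -/
noncomputable def combinationWeights (W : Matrix ι ι R) (K : Matrix ι κ R) : Matrix ι κ R :=
  W⁻¹ * K * combinedCovariance W K

/-- The oblique projection `M` onto the kernel of the constraint matrix `C` along the range of
`V * Cᵀ`; it imposes the constraints on a combination with error covariance `V`. -/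
noncomputable def constraintProjection (V : Matrix κ κ R) (C : Matrix ν κ R) : Matrix κ κ R :=
  1 - V * Cᵀ * (C * V * Cᵀ)⁻¹ * C

/-- The matrix `M * Ωᵀ` that sends base forecasts to their optimal coherent combination. -/
noncomputable def coherentCombination (W : Matrix ι ι R) (K : Matrix ι κ R) (C : Matrix ν κ R) :
    Matrix κ ι R :=
  constraintProjection (combinedCovariance W K) C * (combinationWeights W K)ᵀ

/-- Nondegeneracy of the combination problem: every matrix inverted in `coherentCombination` is
invertible, so that none of these inverses takes its junk value `0`. -/
structure IsNondegenerate (W : Matrix ι ι R) (K : Matrix ι κ R) (C : Matrix ν κ R) : Prop where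
  isUnit_det_covariance : IsUnit W.det
  isUnit_det_information : IsUnit (informationMatrix W K).det
  isUnit_det_constraint : IsUnit (C * combinedCovariance W K * Cᵀ).det

theorem combinedCovariance_congruence (W : Matrix ι ι R) (K : Matrix ι κ R) (hP : IsUnit P.det) :
    combinedCovariance (P * W * Pᵀ) (P * K) = combinedCovariance W K :=
  congrArg Inv.inv (informationMatrix_congruence W K hP)

theorem combinationWeights_congruence (W : Matrix ι ι R) (K : Matrix ι κ R) (hP : IsUnit P.det) :
    combinationWeights (P * W * Pᵀ) (P * K) = (P⁻¹)ᵀ * combinationWeights W K := by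
  rw [combinationWeights, combinedCovariance_congruence W K hP, inv_congruence_mul W K hP,
    Matrix.mul_assoc, combinationWeights]

theorem coherentCombination_congruence_mul (W : Matrix ι ι R) (K : Matrix ι κ R)
    (C : Matrix ν κ R) (hP : IsUnit P.det) :
    coherentCombination (P * W * Pᵀ) (P * K) C * P = coherentCombination W K C := by
  rw [coherentCombination, combinedCovariance_congruence W K hP,
    combinationWeights_congruence W K hP, transpose_mul, transpose_transpose, Matrix.mul_assoc,
    nonsing_inv_mul_cancel_right _ _ hP, coherentCombination]

variable {W : Matrix ι ι R} {K : Matrix ι κ R} {C : Matrix ν κ R}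

theorem IsNondegenerate.congruence (h : IsNondegenerate W K C) (hP : IsUnit P.det) :
    IsNondegenerate (P * W * Pᵀ) (P * K) C where
  isUnit_det_covariance := by
    rw [det_mul, det_mul, det_transpose]
    exact (hP.mul h.isUnit_det_covariance).mul hP
  isUnit_det_information := by
    rw [informationMatrix_congruence W K hP]
    exact h.isUnit_det_information
  isUnit_det_constraint := by
    rw [combinedCovariance_congruence W K hP]
    exact h.isUnit_det_constraint

theorem occ_by_variable_equivalence_general (h : IsNondegenerate W K C) (hP : IsUnit P.det) :
    IsNondegenerate (P * W * Pᵀ) (P * K) C ∧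
      combinedCovariance (P * W * Pᵀ) (P * K) = combinedCovariance W K ∧
      constraintProjection (combinedCovariance (P * W * Pᵀ) (P * K)) C =
        constraintProjection (combinedCovariance W K) C ∧
      combinationWeights (P * W * Pᵀ) (P * K) = (P⁻¹)ᵀ * combinationWeights W K ∧
      coherentCombination (P * W * Pᵀ) (P * K) C * P = coherentCombination W K C ∧
      ∀ y : ι → R,
        coherentCombination (P * W * Pᵀ) (P * K) C *ᵥ (P *ᵥ y) = coherentCombination W K C *ᵥ y :=
  ⟨h.congruence hP, combinedCovariance_congruence W K hP,
    congrArg (constraintProjection · C) (combinedCovariance_congruence W K hP),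
    combinationWeights_congruence W K hP, coherentCombination_congruence_mul W K C hP,
    fun y => by rw [mulVec_mulVec, coherentCombination_congruence_mul W K C hP]⟩

end GeneralizedLeastSquares

theorem permMatrix_mul_transpose {ι R : Type*} [Fintype ι] [DecidableEq ι] [NonAssocSemiring R]
    (σ : Equiv.Perm ι) : σ.permMatrix R * (σ.permMatrix R)ᵀ = 1 := by
  rw [transpose_permMatrix, ← permMatrix_mul, inv_mul_cancel, permMatrix_one]

/-- Appendix D.2: equivalence of by-expert and by-variable organizations of
the base forecasts, via a permutation matrix P. Here `Sig` plays the role of Σ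
and `Sigc` of Σ_c. -/
theorem occ_by_variable_equivalence {m n u : ℕ}
    (W : Matrix (Fin m) (Fin m) ℝ) (hW : W.PosDef)
    (K : Matrix (Fin m) (Fin n) ℝ) (hK : (Kᵀ * W⁻¹ * K).PosDef)
    (C : Matrix (Fin u) (Fin n) ℝ)
    (hC : (C * (Kᵀ * W⁻¹ * K)⁻¹ * Cᵀ).PosDef)
    (σ : Equiv.Perm (Fin m)) :
    let P : Matrix (Fin m) (Fin m) ℝ := σ.permMatrix ℝ
    let W_c : Matrix (Fin n) (Fin n) ℝ := (Kᵀ * W⁻¹ * K)⁻¹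
    let Ω : Matrix (Fin m) (Fin n) ℝ := W⁻¹ * K * W_c
    let M : Matrix (Fin n) (Fin n) ℝ := 1 - W_c * Cᵀ * (C * W_c * Cᵀ)⁻¹ * C
    let Sig : Matrix (Fin m) (Fin m) ℝ := P * W * Pᵀ
    let J : Matrix (Fin m) (Fin n) ℝ := P * K
    let Sigc : Matrix (Fin n) (Fin n) ℝ := (Jᵀ * Sig⁻¹ * J)⁻¹
    let Γ : Matrix (Fin m) (Fin n) ℝ := Sig⁻¹ * J * Sigc
    let M' : Matrix (Fin n) (Fin n) ℝ := 1 - Sigc * Cᵀ * (C * Sigc * Cᵀ)⁻¹ * C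
    P * Pᵀ = 1 ∧
      Sigc = W_c ∧
      M' = M ∧
      Γ = P * Ω ∧
      M' * Γᵀ * P = M * Ωᵀ ∧
      ∀ yhat : Fin m → ℝ,
        (M' * Γᵀ).mulVec (P.mulVec yhat) = (M * Ωᵀ).mulVec yhat := by
  intro P W_c Ω M Sig J Sigc Γ M'
  have hPPt : P * Pᵀ = 1 := permMatrix_mul_transpose σ
  have hPinv : (P⁻¹)ᵀ = P := by rw [inv_eq_right_inv hPPt, transpose_transpose]
  have hnondeg : IsNondegenerate W K C :=
    ⟨hW.det_pos.ne'.isUnit, hK.det_pos.ne'.isUnit, hC.det_pos.ne'.isUnit⟩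
  obtain ⟨-, hcov, hproj, hweights, hcomb, hforecast⟩ :=
    occ_by_variable_equivalence_general hnondeg (isUnit_det_of_right_inverse hPPt)
  rw [hPinv] at hweights
  exact ⟨hPPt, hcov, hproj, hweights, hcomb, hforecast⟩
end
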